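/- Let k ≥ 4 be an even integer, let r ≥ 1, let n₁, …, n_r be positive integers, and set aᵢ = ⌊(k/2)(1 − 1/nᵢ)⌋ for i = 1, …, r. Let τ₀ ∈ ℂ and let w be holomorphic on U \ {τ₀} for some open neighborhood U of τ₀, such that w has a simple pole at τ₀, i.e., (τ − τ₀)·w(τ) extends holomorphically to U with nonzero value at τ₀. Let w₁, …, w_r be complex numbers. Then for every natural number j with j ≤ (Σ_{i=1}^{r} aᵢ) − k, the function τ ↦ (w′(τ))^{k/2} · (w(τ))^j / ∏_{i=1}^{r} (w(τ) − wᵢ)^{aᵢ}, defined near τ₀ where w(τ) ∉ {w₁, …, w_r}, has a removable singularity at τ₀ and extends holomorphically across τ₀. -/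

import Mathlib

open Complex

/-!
A pole of order `p ≥ 1` of `w` is a pole of order `p + 1` of `w'` and of order `p` of each
`w - wᵢ`. Hence `(w')^m · w^j / ∏ᵢ (w - wᵢ)^{aᵢ}` has order
`p ∑ᵢ aᵢ - (p + 1) m - p j`, and a meromorphic function of nonnegative order
extends holomorphically. The simple pole is `p = 1`, with `m = k / 2`.
-/

open Filter Topology

section MeromorphicOrder

variable {𝕜 : Type*} [NontriviallyNormedField 𝕜] {x : 𝕜}

lemma meromorphicOrderAt_eq_neg_of_eventuallyEq_pow_smul {E : Type*} [NormedAddCommGroup E]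
    [NormedSpace 𝕜 E] {f g : 𝕜 → E} {p : ℕ} (hg : AnalyticAt 𝕜 g x) (hgx : g x ≠ 0)
    (hfg : ∀ᶠ z in 𝓝[≠] x, g z = (z - x) ^ p • f z) :
    meromorphicOrderAt f x = ((-p : ℤ) : WithTop ℤ) := by
  have hf : f =ᶠ[𝓝[≠] x] fun z ↦ (z - x) ^ (-p : ℤ) • g z := by
    filter_upwards [hfg, self_mem_nhdsWithin] with z hz hzx
    have hpow : (z - x) ^ p ≠ 0 := pow_ne_zero p (sub_ne_zero.mpr hzx)
    rw [hz, zpow_neg, zpow_natCast, inv_smul_smul₀ hpow]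
  have hmero : MeromorphicAt f x := by
    rw [MeromorphicAt.meromorphicAt_congr hf]
    fun_prop
  exact (meromorphicOrderAt_eq_int_iff hmero).mpr ⟨g, hg, hgx, hf⟩

lemma meromorphicOrderAt_sub_const_of_neg {E : Type*} [NormedAddCommGroup E] [NormedSpace 𝕜 E]
    {f : 𝕜 → E} (hf : meromorphicOrderAt f x < 0) (c : E) :
    meromorphicOrderAt (fun z ↦ f z - c) x = meromorphicOrderAt f x := by
  have hc : AnalyticAt 𝕜 (fun _ : 𝕜 ↦ -c) x := analyticAt_const
  simpa only [sub_eq_add_neg] using! meromorphicOrderAt_add_eq_left_of_lt hc.meromorphicAt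
    (hf.trans_le hc.meromorphicOrderAt_nonneg)

variable [CompleteSpace 𝕜] [CharZero 𝕜] {ι : Type*}

lemma meromorphicOrderAt_deriv_pow_mul_pow_div_prod_sub_pow {f : 𝕜 → 𝕜} {n : ℤ} (hn : n < 0)
    (hf : meromorphicOrderAt f x = n) (m j : ℕ) (s : Finset ι) (a : ι → ℕ) (c : ι → 𝕜) :
    meromorphicOrderAt (fun z ↦ deriv f z ^ m * f z ^ j / ∏ i ∈ s, (f z - c i) ^ a i) x =
      ((m * (n - 1) + j * n - (∑ i ∈ s, a i : ℕ) * n : ℤ) : WithTop ℤ) := by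
  have hneg : meromorphicOrderAt f x < 0 := by rw [hf]; exact_mod_cast hn
  have hmero : MeromorphicAt f x := meromorphicAt_of_meromorphicOrderAt_ne_zero hneg.ne
  have hfactor (i : ι) : meromorphicOrderAt (fun z ↦ (f z - c i) ^ a i) x = (a i * n : ℤ) := by
    rw [fun_meromorphicOrderAt_pow (by fun_prop), meromorphicOrderAt_sub_const_of_neg hneg, hf]
    norm_cast
  have hprod : meromorphicOrderAt (fun z ↦ ∏ i ∈ s, (f z - c i) ^ a i) x =
      ((∑ i ∈ s, a i : ℕ) * n : ℤ) := by
    rw [meromorphicOrderAt_fun_prod fun i _ ↦ by fun_prop]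
    simp only [hfactor, Nat.cast_sum, Finset.sum_mul]
    norm_cast
  rw [fun_meromorphicOrderAt_div (by fun_prop) (by fun_prop),
    fun_meromorphicOrderAt_mul (by fun_prop) (by fun_prop), fun_meromorphicOrderAt_pow hmero.deriv,
    fun_meromorphicOrderAt_pow hmero, hprod, hf,
    meromorphicOrderAt_deriv_eq_sub_one (by exact_mod_cast hn.ne) hf]
  norm_cast

end MeromorphicOrder

lemma exists_differentiableOn_eq_off_of_meromorphicOrderAt_nonneg {E : Type*}
    [NormedAddCommGroup E] [NormedSpace ℂ E] [CompleteSpace E] {f : ℂ → E} {x : ℂ}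
    (hf : MeromorphicAt f x) (hord : 0 ≤ meromorphicOrderAt f x) {U : Set ℂ} (hU : U ∈ 𝓝 x) :
    ∃ V : Set ℂ, IsOpen V ∧ x ∈ V ∧ V ⊆ U ∧
      ∃ h : ℂ → E, DifferentiableOn ℂ h V ∧ ∀ z ∈ V, z ≠ x → h z = f z := by
  have hana : AnalyticAt ℂ (toMeromorphicNFAt f x) x :=
    hf.meromorphicOrderAt_nonneg_iff_analyticAt_toMeromorphicNFAt.mp hord
  obtain ⟨V, hV, hVopen, hxV⟩ := eventually_nhds_iff.mp (hana.eventually_analyticAt.and hU)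
  exact ⟨V, hVopen, hxV, fun z hz ↦ (hV z hz).2, toMeromorphicNFAt f x,
    fun z hz ↦ (hV z hz).1.differentiableAt.differentiableWithinAt,
    fun z _ hzx ↦ (hf.eqOn_compl_singleton_toMeromorphicNFAt hzx).symm⟩

theorem removable_singularity_at_simple_pole_general {ι : Type*} (s : Finset ι) (a : ι → ℕ)
    (c : ι → ℂ) (m j p : ℕ) (hp : p ≠ 0) (hj : (p + 1) * m + p * j ≤ p * ∑ i ∈ s, a i)
    {τ₀ : ℂ} {U : Set ℂ} (hU : IsOpen U) (hτ₀ : τ₀ ∈ U) {w v : ℂ → ℂ}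
    (hv : DifferentiableOn ℂ v U) (hv0 : v τ₀ ≠ 0)
    (hpole : ∀ τ ∈ U, τ ≠ τ₀ → v τ = (τ - τ₀) ^ p * w τ) :
    ∃ V : Set ℂ, IsOpen V ∧ τ₀ ∈ V ∧ V ⊆ U ∧
      ∃ h : ℂ → ℂ, DifferentiableOn ℂ h V ∧
        ∀ τ ∈ V, τ ≠ τ₀ → (∀ i ∈ s, w τ ≠ c i) →
          h τ = deriv w τ ^ m * w τ ^ j / ∏ i ∈ s, (w τ - c i) ^ a i := by
  have hUτ₀ : U ∈ 𝓝 τ₀ := hU.mem_nhds hτ₀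
  have hw : meromorphicOrderAt w τ₀ = ((-p : ℤ) : WithTop ℤ) := by
    refine meromorphicOrderAt_eq_neg_of_eventuallyEq_pow_smul (hv.analyticAt hUτ₀) hv0 ?_
    filter_upwards [nhdsWithin_le_nhds hUτ₀, self_mem_nhdsWithin] with τ hτ hne
    exact hpole τ hτ hne
  have hmero : MeromorphicAt w τ₀ :=
    meromorphicAt_of_meromorphicOrderAt_ne_zero (by simpa [hw] using hp)
  have hquot : MeromorphicAt
      (fun τ ↦ deriv w τ ^ m * w τ ^ j / ∏ i ∈ s, (w τ - c i) ^ a i) τ₀ := by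
    fun_prop
  have hord := meromorphicOrderAt_deriv_pow_mul_pow_div_prod_sub_pow (by omega) hw m j s a c
  have hnonneg : (0 : ℤ) ≤ m * (-p - 1) + j * -p - (∑ i ∈ s, a i : ℕ) * -p := by
    zify at hj ⊢
    linarith
  obtain ⟨V, hV, hτ₀V, hVU, h, hh, heq⟩ :=
    exists_differentiableOn_eq_off_of_meromorphicOrderAt_nonneg hquot
      (hord ▸ mod_cast hnonneg) hUτ₀
  exact ⟨V, hV, hτ₀V, hVU, h, hh, fun τ hτ hne _ ↦ heq τ hτ hne⟩

/-- Case (iii) of Theorem 2.1: if the Hauptmodul `w` has a simple pole at a point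
`τ₀` distinct from the vertices, then for `j ≤ (Σᵢ aᵢ) - k` the function
`(w')^(k/2) · w^j / ∏ᵢ (w - wᵢ)^{aᵢ}` has a removable singularity at `τ₀`. -/
theorem removable_singularity_at_simple_pole
    (k : ℕ) (hk4 : 4 ≤ k) (hkeven : Even k)
    (r : ℕ) (hr : 1 ≤ r)
    (n : Fin r → ℕ) (hn : ∀ i, 1 ≤ n i)
    (a : Fin r → ℕ) (ha : ∀ i, (a i : ℤ) = ⌊(k : ℚ) / 2 * (1 - 1 / (n i : ℚ))⌋)
    (τ₀ : ℂ) (U : Set ℂ) (hU : IsOpen U) (hτ₀ : τ₀ ∈ U)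
    (w : ℂ → ℂ) (hw : DifferentiableOn ℂ w (U \ {τ₀}))
    (v : ℂ → ℂ) (hv : DifferentiableOn ℂ v U) (hv0 : v τ₀ ≠ 0)
    (hpole : ∀ τ ∈ U, τ ≠ τ₀ → v τ = (τ - τ₀) * w τ)
    (wv : Fin r → ℂ)
    (j : ℕ) (hj : (j : ℤ) ≤ (∑ i : Fin r, (a i : ℤ)) - k) :
    ∃ V : Set ℂ, IsOpen V ∧ τ₀ ∈ V ∧ V ⊆ U ∧
      ∃ h : ℂ → ℂ, DifferentiableOn ℂ h V ∧
        ∀ τ ∈ V, τ ≠ τ₀ → (∀ i : Fin r, w τ ≠ wv i) →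
          h τ = (deriv w τ) ^ (k / 2) * (w τ) ^ j /
            ∏ i : Fin r, (w τ - wv i) ^ (a i) := by
  have hj' : (1 + 1) * (k / 2) + 1 * j ≤ 1 * ∑ i, a i := by zify at hj ⊢; omega
  simpa using removable_singularity_at_simple_pole_general Finset.univ a wv (k / 2) j 1
    one_ne_zero hj' hU hτ₀ hv hv0 (by simpa using hpole)
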